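/- If there exist ĩ ∈ {1,…,n} and j̃ ∈ {ĩ+2,…,n} such that (Σ_{k=s_ĩ+1}^{s_i} b_k)/(Σ_{k=s_ĩ+1}^{s_i} a_k) < (Σ_{k=s_i+1}^{s_j̃} b_k)/(Σ_{k=s_i+1}^{s_j̃} a_k) for all i = ĩ+1,…,j̃−1, then (Σ_{k=s_ĩ+1}^m b_k)/(Σ_{k=s_ĩ+1}^m a_k) < (Σ_{k=m+1}^{s_j̃} b_k)/(Σ_{k=m+1}^{s_j̃} a_k) for all m = s_ĩ+1,…,s_j̃−1. -/

import Mathlib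

open Finset

noncomputable section

/-- Membership in the domain `D` of the optimization problem. -/
def memD (ℓ : ℕ) (a b x y : ℕ → ℝ) : Prop :=
  (∀ i ∈ Finset.Icc 1 ℓ, 0 < x i ∧ 0 < y i) ∧
  (∑ i ∈ Finset.Icc 1 ℓ, (x i + y i)) ≤ 1 ∧
  (∀ m ∈ Finset.Icc 1 ℓ,
    0 ≤ ∑ i ∈ Finset.Icc 1 m, (x i - (a i) ^ 2 / (2 * x i) - (b i) ^ 2 / (2 * y i)))

/-- Membership in the domain `D̂`: elements of `D` where the cumulative condition holds with
equality for `m = ℓ`. -/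
def memDhat (ℓ : ℕ) (a b x y : ℕ → ℝ) : Prop :=
  memD ℓ a b x y ∧
  (∑ i ∈ Finset.Icc 1 ℓ, (x i - (a i) ^ 2 / (2 * x i) - (b i) ^ 2 / (2 * y i))) = 0

/-- The convention `c_0 = c_ℓ = 0`. -/
def cbar (ℓ : ℕ) (c : ℕ → ℝ) (m : ℕ) : ℝ := if m = 0 ∨ m = ℓ then 0 else c m

/-- Membership in `D^m(c, c')`. -/
def memDm (a b : ℕ → ℝ) (N : ℝ) (m : ℕ) (c c' x y : ℝ) : Prop :=
  0 < x ∧ 0 < y ∧ x + y ≤ N ∧ c + x - (a m) ^ 2 / (2 * x) - (b m) ^ 2 / (2 * y) = c'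

/-- Membership in `D̃(c_1, …, c_{ℓ-1})`. -/
def memDtilde (ℓ : ℕ) (a b : ℕ → ℝ) (N : ℝ) (c x y : ℕ → ℝ) : Prop :=
  (∑ i ∈ Finset.Icc 1 ℓ, (x i + y i)) ≤ 1 ∧
  ∀ m ∈ Finset.Icc 1 ℓ, memDm a b N m (cbar ℓ c (m - 1)) (cbar ℓ c m) (x m) (y m)

/-- Membership in `D^c`. -/
def memDc (ℓ : ℕ) (a b : ℕ → ℝ) (N : ℝ) (c : ℕ → ℝ) : Prop :=
  (∀ m ∈ Finset.Icc 1 (ℓ - 1), 0 ≤ c m) ∧ ∃ x y, memDtilde ℓ a b N c x y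

/-- `(x, y)` minimizes `x + y` over `D^m(c, c')`. -/
def isArgminDm (a b : ℕ → ℝ) (N : ℝ) (m : ℕ) (c c' x y : ℝ) : Prop :=
  memDm a b N m c c' x y ∧ ∀ x' y' : ℝ, memDm a b N m c c' x' y' → x + y ≤ x' + y'

/-- The projection `D^m_x(c, C)` of `D^m(c, C)` to the first coordinate. -/
def Dmx (a b : ℕ → ℝ) (N : ℝ) (m : ℕ) (c C : ℝ) : Set ℝ :=
  {x : ℝ | ∃ y : ℝ, memDm a b N m c C x y}

/-- The function `f(c̃) = sqrt((1 + c̃)/2 + sqrt(c̃²/4 + c̃))`. -/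
def fval (c : ℝ) : ℝ := Real.sqrt ((1 + c) / 2 + Real.sqrt (c ^ 2 / 4 + c))

/-- `c̃ = (Σ b_i)² / (2 (Σ a_i)²)`. -/
def ctilde (ℓ : ℕ) (a b : ℕ → ℝ) : ℝ :=
  (∑ i ∈ Finset.Icc 1 ℓ, b i) ^ 2 / (2 * (∑ i ∈ Finset.Icc 1 ℓ, a i) ^ 2)

/-- The objective function `F` on `ℝ^{2ℓ}`. -/
def Fobj (ℓ : ℕ) (a b x y : ℕ → ℝ) : ℝ :=
  (1 - ∑ i ∈ Finset.Icc 1 ℓ, (x i + y i)) *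
  (1 - ∑ i ∈ Finset.Icc 1 ℓ, (y i + (a i) ^ 2 / (2 * x i) + (b i) ^ 2 / (2 * y i)))

/-- The late-expensive-obstacles assumption. -/
def LateExpensive (ℓ : ℕ) (a b : ℕ → ℝ) : Prop :=
  ∀ m, 1 ≤ m → m < ℓ →
    (∑ i ∈ Finset.Icc 1 m, b i) / (∑ i ∈ Finset.Icc 1 m, a i) <
      (∑ i ∈ Finset.Icc (m + 1) ℓ, b i) / (∑ i ∈ Finset.Icc (m + 1) ℓ, a i)

/-- The ratio `(Σ_{j=p}^q b_j) / (Σ_{j=p}^q a_j)`. -/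
def ratioBA (a b : ℕ → ℝ) (p q : ℕ) : ℝ :=
  (∑ j ∈ Finset.Icc p q, b j) / (∑ j ∈ Finset.Icc p q, a j)

/-- `u` (on indices `0, …, n+1`) is an admissible division into blocks. -/
def AdmissibleDiv (ℓ : ℕ) (a b : ℕ → ℝ) (n : ℕ) (u : ℕ → ℕ) : Prop :=
  u 0 = 0 ∧ u (n + 1) = ℓ ∧ (∀ i ≤ n, u i < u (i + 1)) ∧
  ∀ i ≤ n, ∀ m, u i < m → m < u (i + 1) →
    ratioBA a b (u i + 1) m < ratioBA a b (m + 1) (u (i + 1))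

/-- The canonical admissible division into blocks: the admissible division whose index
set is the intersection of the index sets of all admissible divisions into blocks. -/
def IsCanonicalDiv (ℓ : ℕ) (a b : ℕ → ℝ) (n : ℕ) (u : ℕ → ℕ) : Prop :=
  AdmissibleDiv ℓ a b n u ∧
  ∀ k, (∃ i ≤ n + 1, u i = k) ↔
    ∀ (n' : ℕ) (u' : ℕ → ℕ), AdmissibleDiv ℓ a b n' u' → ∃ i ≤ n' + 1, u' i = k

/-- The minimal time to cross one block with branching length `A` and obstacle length `B`. -/
def blockTime (A B : ℝ) : ℝ :=
  A * fval (B ^ 2 / (2 * A ^ 2)) +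
    B ^ 2 / (2 * A * (fval (B ^ 2 / (2 * A ^ 2)) - 1 / (2 * fval (B ^ 2 / (2 * A ^ 2)))))

/-- The total optimal time `T*` associated with a division into blocks. -/
def Tstar (a b : ℕ → ℝ) (n : ℕ) (u : ℕ → ℕ) : ℝ :=
  ∑ i ∈ Finset.range (n + 1),
    blockTime (∑ j ∈ Finset.Icc (u i + 1) (u (i + 1)), a j)
      (∑ j ∈ Finset.Icc (u i + 1) (u (i + 1)), b j)

/-- The coefficient appearing in the formula for the optimal `c_m`. -/
def coefC (ℓ : ℕ) (a b : ℕ → ℝ) (m : ℕ) : ℝ :=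
  ((∑ i ∈ Finset.Icc 1 m, a i) * (∑ i ∈ Finset.Icc (m + 1) ℓ, b i) -
    (∑ i ∈ Finset.Icc 1 m, b i) * (∑ i ∈ Finset.Icc (m + 1) ℓ, a i)) /
    (∑ i ∈ Finset.Icc 1 ℓ, b i)

theorem sum_Icc_succ_eq_sub (f : ℕ → ℝ) (p q : ℕ) (h : p ≤ q) :
    ∑ j ∈ Finset.Icc (p + 1) q, f j
      = ∑ j ∈ Finset.Icc 1 q, f j - ∑ j ∈ Finset.Icc 1 p, f j := by
  induction q, h using Nat.le_induction with
  | base => simp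
  | succ q hq ih =>
    rw [Finset.sum_Icc_succ_top (by omega), Finset.sum_Icc_succ_top (by omega), ih]
    ring

/-- If the ratio inequality holds along the `s_i` between `s_ĩ` and `s_j̃`,
then it holds for all intermediate indices `m`. -/
theorem ratio_ineq_propagates (ℓ : ℕ) (hℓ : 1 ≤ ℓ) (a b : ℕ → ℝ)
    (ha : ∀ i ∈ Finset.Icc 1 ℓ, 0 < a i) (hb : ∀ i ∈ Finset.Icc 1 ℓ, 0 < b i)
    (n : ℕ) (s : ℕ → ℕ)
    (hs0 : s 0 = 0) (hsl : s (n + 1) = ℓ) (hsmono : ∀ i ≤ n, s i < s (i + 1))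
    (hsset : ∀ m : ℕ, (∃ i : ℕ, 1 ≤ i ∧ i ≤ n ∧ s i = m) ↔
      (1 ≤ m ∧ m < ℓ ∧ ratioBA a b (m + 1) ℓ ≤ ratioBA a b 1 m))
    (ti tj : ℕ) (hti1 : 1 ≤ ti) (htin : ti ≤ n) (htij : ti + 2 ≤ tj) (htjn : tj ≤ n)
    (hhyp : ∀ i : ℕ, ti < i → i < tj →
      ratioBA a b (s ti + 1) (s i) < ratioBA a b (s i + 1) (s tj)) :
    ∀ m : ℕ, s ti < m → m < s tj →
      ratioBA a b (s ti + 1) m < ratioBA a b (m + 1) (s tj) := by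
  intro m hm1 hm2
  have mono : ∀ i j, i ≤ j → j ≤ n + 1 → s i ≤ s j := by
    intro i j hij
    induction j, hij using Nat.le_induction with
    | base => intro _; exact le_rfl
    | succ j hj ih =>
      intro h
      have h1 := ih (by omega)
      have h2 := hsmono j (by omega)
      omega
  obtain ⟨hp1, hpl, hp⟩ := (hsset (s ti)).1 ⟨ti, hti1, htin, rfl⟩
  obtain ⟨hq1, hql, hq⟩ := (hsset (s tj)).1 ⟨tj, by omega, htjn, rfl⟩
  by_cases hS : ratioBA a b (m + 1) ℓ ≤ ratioBA a b 1 m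
  · obtain ⟨i, hi1, hi2, rfl⟩ := (hsset m).2 ⟨by omega, by omega, hS⟩
    apply hhyp i
    · by_contra hc
      have := mono i ti (by omega) (by omega)
      omega
    · by_contra hc
      have := mono tj i (by omega) (by omega)
      omega
  · have key : ∀ p q, p < q → q ≤ ℓ →
        ∑ j ∈ Finset.Icc 1 p, a j < ∑ j ∈ Finset.Icc 1 q, a j := by
      intro p q hpq hql
      have h1 := sum_Icc_succ_eq_sub a p q hpq.le
      have h2 : 0 < ∑ j ∈ Finset.Icc (p + 1) q, a j := by
        apply Finset.sum_pos
        · intro i hi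
          rw [Finset.mem_Icc] at hi
          exact ha i (Finset.mem_Icc.2 ⟨by omega, by omega⟩)
        · exact Finset.nonempty_Icc.2 hpq
      linarith
    rw [not_le] at hS
    unfold ratioBA at *
    have k1 := key (s ti) m hm1 (by omega)
    have k2 := key m (s tj) hm2 (by omega)
    have k3 := key (s tj) ℓ hql le_rfl
    have k0 := key 0 (s ti) (by omega) (by omega)
    rw [show Finset.Icc 1 0 = (∅ : Finset ℕ) from rfl, Finset.sum_empty] at k0
    rw [sum_Icc_succ_eq_sub b _ _ hm1.le, sum_Icc_succ_eq_sub a _ _ hm1.le,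
      sum_Icc_succ_eq_sub b _ _ hm2.le, sum_Icc_succ_eq_sub a _ _ hm2.le]
    rw [sum_Icc_succ_eq_sub b _ _ hpl.le, sum_Icc_succ_eq_sub a _ _ hpl.le] at hp
    rw [sum_Icc_succ_eq_sub b _ _ hql.le, sum_Icc_succ_eq_sub a _ _ hql.le] at hq
    rw [sum_Icc_succ_eq_sub b m ℓ (by omega), sum_Icc_succ_eq_sub a m ℓ (by omega)] at hS
    clear hhyp
    generalize ∑ j ∈ Finset.Icc 1 (s ti), a j = Ap at *
    generalize ∑ j ∈ Finset.Icc 1 (s ti), b j = Bp at *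
    generalize ∑ j ∈ Finset.Icc 1 (s tj), a j = Aq at *
    generalize ∑ j ∈ Finset.Icc 1 (s tj), b j = Bq at *
    generalize ∑ j ∈ Finset.Icc 1 m, a j = Am at *
    generalize ∑ j ∈ Finset.Icc 1 m, b j = Bm at *
    generalize ∑ j ∈ Finset.Icc 1 ℓ, a j = Al at *
    generalize ∑ j ∈ Finset.Icc 1 ℓ, b j = Bl at *
    rw [div_le_div_iff₀ (by linarith) (by linarith)] at hp hq
    rw [div_lt_div_iff₀ (by linarith) (by linarith)] at hS ⊢
    have gp : 0 ≤ Bp * Al - Bl * Ap := by linarith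
    have gq : 0 ≤ Bq * Al - Bl * Aq := by linarith
    have gm : Bm * Al - Bl * Am < 0 := by linarith
    have hAl : 0 < Al := by linarith
    have h1 : 0 < ((Bp * Al - Bl * Ap) - (Bm * Al - Bl * Am)) * (Aq - Am) :=
      mul_pos (by linarith) (by linarith)
    have h2 : 0 < ((Bq * Al - Bl * Aq) - (Bm * Al - Bl * Am)) * (Am - Ap) :=
      mul_pos (by linarith) (by linarith)
    refine lt_of_mul_lt_mul_left ?_ hAl.le
    linarith
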